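/- Let p be a prime with p ≡ 3 (mod 8). Then the sum of all non-residues of p in [1, p−1] is strictly greater than the sum of all quadratic residues of p in [1, p−1], i.e. ΣN > ΣR. -/

import Mathlib

open Polynomial

noncomputable def thetaOp (R : Type*) [CommRing R] : Module.End R R[X] :=
  (LinearMap.mulLeft R (X : R[X])).comp derivative

lemma thetaOp_apply {R : Type*} [CommRing R] (f : R[X]) : thetaOp R f = X * derivative f := rfl

lemma thetaOp_X_pow {R : Type*} [CommRing R] (m j : ℕ) :
    ((thetaOp R) ^ m) (X ^ j) = C ((j : R) ^ m) * X ^ j := by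
  induction m with
  | zero => simp
  | succ m ih =>
    rw [pow_succ', Module.End.mul_apply, ih, thetaOp_apply, derivative_C_mul, derivative_X_pow]
    rcases j with _ | j
    · simp
    · rw [pow_succ (((j + 1 : ℕ) : R)), C_mul, Nat.add_sub_cancel]
      ring

lemma thetaOp_pow_mul {R : Type*} [CommRing R] (m : ℕ) (u : R[X]) :
    (((thetaOp R) ^ m) ((X - 1) ^ m * u)).eval 1 = (m.factorial : R) * u.eval 1 := by
  induction m generalizing u with
  | zero => simp
  | succ m ih =>
    rw [pow_succ, Module.End.mul_apply, thetaOp_apply]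
    have : X * derivative ((X - 1 : R[X]) ^ (m + 1) * u) =
        (X - 1 : R[X]) ^ m * (X * (((m + 1 : ℕ) : R[X]) * u + (X - 1) * derivative u)) := by
      simp [derivative_mul, derivative_pow]
      ring
    rw [this, ih, Nat.factorial_succ]
    simp
    ring

lemma gauss_sign_eps (p : ℕ) [Fact p.Prime] (hmod : p % 8 = 3) (ζ : ℂ) (hζ : IsPrimitiveRoot ζ p)
    (ε : ℤ) (h : ∑ j ∈ Finset.range p, ((quadraticChar (ZMod p) (j : ZMod p) : ℤ) : ℂ) * ζ ^ j =
      (ε : ℂ) * ∏ k ∈ Finset.range (p / 2), (ζ ^ (k + 1) - ζ ^ (p - (k + 1)))) :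
    (ε : ZMod p) = 1 := by
  have hp : p.Prime := Fact.out
  set f : ℤ[X] := ∑ j ∈ Finset.range p, C (quadraticChar (ZMod p) (j : ZMod p)) * X ^ j -
    C ε * ∏ k ∈ Finset.range (p / 2), (X ^ (k + 1) - X ^ (p - (k + 1))) with hf
  have h0 : aeval ζ f = 0 := by
    simp [hf, map_sum, map_prod, h, -quadraticChar_apply]
  have hd : cyclotomic p ℤ ∣ f := by
    rw [cyclotomic_eq_minpoly hζ hp.pos]
    exact minpoly.isIntegrallyClosed_dvd (hζ.isIntegral hp.pos) h0
  have hd2 : (X - 1 : (ZMod p)[X]) ^ (p - 1) ∣ f.map (Int.castRingHom (ZMod p)) := by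
    have := Polynomial.map_dvd (Int.castRingHom (ZMod p)) hd
    rw [map_cyclotomic] at this
    have h2 := cyclotomic_mul_prime_eq_pow_of_not_dvd (ZMod p) (p := p) (n := 1)
      (fun h => hp.one_lt.not_ge (Nat.le_of_dvd one_pos h))
    rw [one_mul, cyclotomic_one] at h2
    rwa [h2] at this
  set n := p / 2 with hn
  have hpn : p - 1 = n + (1 + (n - 1)) := by omega
  obtain ⟨v, hv⟩ := hd2
  have e1 : (((thetaOp (ZMod p)) ^ n) (f.map (Int.castRingHom (ZMod p)))).eval 1 = 0 := by
    rw [hv, hpn, pow_add, mul_assoc, thetaOp_pow_mul, pow_add]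
    simp
  have hch : ringChar (ZMod p) ≠ 2 := by rw [ZMod.ringChar_zmod_n]; omega
  have e2 : f.map (Int.castRingHom (ZMod p)) =
      ∑ j ∈ Finset.range p, C ((j : ZMod p) ^ n) * X ^ j -
      C (ε : ZMod p) * ((X - 1) ^ n * ∏ k ∈ Finset.range n,
        ((∑ i ∈ Finset.range (k + 1), X ^ i) - (∑ i ∈ Finset.range (p - (k + 1)), X ^ i))) := by
    have hprod : (X - 1 : (ZMod p)[X]) ^ n = ∏ k ∈ Finset.range n, (X - 1 : (ZMod p)[X]) := by simp
    rw [hprod, ← Finset.prod_mul_distrib, hf, Polynomial.map_sub, Polynomial.map_mul,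
      Polynomial.map_sum, Polynomial.map_prod]
    congr 1
    · refine Finset.sum_congr rfl fun j _ => ?_
      have := quadraticChar_eq_pow_of_char_ne_two' hch (j : ZMod p)
      rw [ZMod.card] at this
      rw [Polynomial.map_mul, map_C, Polynomial.map_pow, map_X, eq_intCast, this]
    · rw [map_C, eq_intCast]
      congr 1
      refine Finset.prod_congr rfl fun k _ => ?_
      rw [mul_sub, mul_geom_sum, mul_geom_sum]
      simp
  have e3 : ∑ j ∈ Finset.range p, (j : ZMod p) ^ n * (j : ZMod p) ^ n = -1 := by
    obtain ⟨q, rfl⟩ : ∃ q, p = q + 1 := ⟨p - 1, by omega⟩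
    rw [Finset.sum_range_succ']
    have : n ≠ 0 := by omega
    simp only [Nat.cast_zero, zero_pow this, mul_zero, add_zero]
    rw [Finset.sum_congr rfl (g := fun _ => 1)]
    · simp
      have := ZMod.natCast_self (q + 1)
      push_cast at this
      linear_combination this
    · intro j hj
      rw [← pow_add, show n + n = q + 1 - 1 by omega]
      apply ZMod.pow_card_sub_one_eq_one
      rw [Ne, ZMod.natCast_eq_zero_iff]
      intro hh
      have := Nat.le_of_dvd (by omega) hh
      simp at hj; omega
  have e4 : ∏ k ∈ Finset.range n, (((k + 1 : ℕ) : ZMod p) - ((p - (k + 1) : ℕ) : ZMod p)) =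
      2 ^ n * (n.factorial : ZMod p) := by
    rw [← Finset.prod_range_add_one_eq_factorial, Nat.cast_prod,
      show (2 : ZMod p) ^ n = ∏ k ∈ Finset.range n, 2 by simp, ← Finset.prod_mul_distrib]
    refine Finset.prod_congr rfl fun k hk => ?_
    rw [Finset.mem_range] at hk
    rw [Nat.cast_sub (by omega)]
    simp; ring
  have e5 : (2 : ZMod p) ^ n = -1 := by
    have h1 := quadraticChar_eq_pow_of_char_ne_two' hch (2 : ZMod p)
    rw [quadraticChar_two hch, ZMod.card, ZMod.χ₈_nat_eq_if_mod_eight] at h1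
    rw [if_neg (by omega), if_neg (by omega)] at h1
    rw [← h1]; simp
  have e6 : (n.factorial : ZMod p) * n.factorial = 1 := by
    have hw := ZMod.wilsons_lemma p
    rw [show p - 1 = n + n by omega, ← Nat.factorial_mul_ascFactorial, Nat.cast_mul,
      Nat.ascFactorial_eq_prod_range, ← Finset.prod_range_reflect] at hw
    have : ((∏ j ∈ Finset.range n, (n + 1 + (n - 1 - j)) : ℕ) : ZMod p) = - n.factorial := by
      rw [← Finset.prod_range_add_one_eq_factorial, Nat.cast_prod, Nat.cast_prod]
      have : (-1 : ZMod p) = ∏ k ∈ Finset.range n, (-1) := by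
        rw [Finset.prod_const, Finset.card_range, Odd.neg_one_pow (Nat.odd_iff.2 (by omega))]
      rw [neg_eq_neg_one_mul, this, ← Finset.prod_mul_distrib]
      refine Finset.prod_congr rfl fun k hk => ?_
      rw [Finset.mem_range] at hk
      rw [show n + 1 + (n - 1 - k) = p - (k + 1) by omega, Nat.cast_sub (by omega)]
      simp
    rw [this] at hw
    linear_combination -hw
  rw [e2, map_sub, eval_sub, map_sum, eval_finsetSum] at e1
  simp only [← Polynomial.smul_eq_C_mul, map_smul, eval_smul, thetaOp_pow_mul, thetaOp_X_pow] at e1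
  simp only [eval_prod, eval_sub, eval_finsetSum, eval_pow, eval_X, one_pow, smul_eq_mul,
    Finset.sum_const, Finset.card_range, nsmul_eq_mul, mul_one] at e1
  rw [e3, e4, e5] at e1
  linear_combination e1 + (ε : ZMod p) * (- e6)

lemma zeta_sub_eq (p k : ℕ) (hp : 0 < p) (hk : k < p) :
    Complex.exp (2 * Real.pi * Complex.I / p) ^ k - Complex.exp (2 * Real.pi * Complex.I / p) ^ (p - k)
      = Complex.I * ((2 * Real.sin (2 * Real.pi * k / p) : ℝ) : ℂ) := by
  have hp0 : (p : ℂ) ≠ 0 := by exact_mod_cast hp.ne'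
  rw [← Complex.exp_nat_mul, ← Complex.exp_nat_mul, Nat.cast_sub hk.le]
  have h1 : ((p : ℂ) - k) * (2 * Real.pi * Complex.I / p) =
      -((k : ℂ) * (2 * Real.pi * Complex.I / p)) + 2 * Real.pi * Complex.I := by
    field_simp
    ring
  rw [h1, Complex.exp_add, Complex.exp_two_pi_mul_I, mul_one]
  push_cast
  rw [Complex.sin]
  have h2 : (k : ℂ) * (2 * Real.pi * Complex.I / p) = 2 * Real.pi * k / p * Complex.I := by ring
  rw [h2, ← neg_mul]
  linear_combination (Complex.exp (2 * Real.pi * k / p * Complex.I)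
    - Complex.exp (-(2 * Real.pi * k / p) * Complex.I)) * Complex.I_sq

lemma gauss_prod_value (p : ℕ) [Fact p.Prime] (hmod : p % 8 = 3) (ζ : ℂ)
    (hζ : ζ = Complex.exp (2 * Real.pi * Complex.I / p)) :
    ∏ k ∈ Finset.range (p / 2), (ζ ^ (k + 1) - ζ ^ (p - (k + 1))) =
      Complex.I * (Real.sqrt p : ℂ) := by
  have hp : p.Prime := Fact.out
  have hprim : IsPrimitiveRoot ζ p := hζ ▸ Complex.isPrimitiveRoot_exp p hp.ne_zero
  set r : ℝ := ∏ k ∈ Finset.range (p / 2), (2 * Real.sin (2 * Real.pi * (k + 1 : ℕ) / p)) with hr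
  have hpR : (0 : ℝ) < p := by exact_mod_cast hp.pos
  have hrpos : 0 < r := by
    refine Finset.prod_pos fun k hk => ?_
    rw [Finset.mem_range] at hk
    have h1 : (2 * (k + 1 : ℕ) : ℝ) < p := by
      have : 2 * (k + 1) < p := by omega
      exact_mod_cast this
    have : 0 < Real.sin (2 * Real.pi * (k + 1 : ℕ) / p) := by
      apply Real.sin_pos_of_pos_of_lt_pi
      · positivity
      · rw [div_lt_iff₀ hpR]
        nlinarith [Real.pi_pos]
    linarith
  have e1 : ∏ k ∈ Finset.range (p / 2), (ζ ^ (k + 1) - ζ ^ (p - (k + 1))) = Complex.I * (r : ℂ) := by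
    rw [Finset.prod_congr rfl (g := fun k : ℕ => Complex.I *
      ((2 * Real.sin (2 * Real.pi * (k + 1 : ℕ) / p) : ℝ) : ℂ))]
    · rw [Finset.prod_mul_distrib, Finset.prod_const, Finset.card_range, hr, Complex.ofReal_prod,
        ← Nat.div_add_mod (p / 2) 4, show p / 2 % 4 = 1 by omega, pow_add, pow_mul, Complex.I_pow_four]
      rw [one_pow, one_mul, pow_one]
    · intro k hk
      rw [Finset.mem_range] at hk
      rw [hζ, zeta_sub_eq p (k + 1) hp.pos (by omega)]
  have hnz : ‖ζ‖ = 1 := hprim.norm'_eq_one hp.ne_zero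
  have e2 : r * r = p := by
    have hr' : ∏ k ∈ Finset.range (p / 2), ‖ζ ^ (k + 1) - ζ ^ (p - (k + 1))‖ = r := by
      rw [← norm_prod, e1, norm_mul, Complex.norm_I, one_mul, Complex.norm_real, Real.norm_eq_abs,
        abs_of_pos hrpos]
    have hω : IsPrimitiveRoot (ζ ^ 2) (p - 1 + 1) := by
      rw [Nat.sub_add_cancel hp.one_lt.le]
      refine hprim.pow_of_coprime 2 ?_
      exact (Nat.coprime_primes Nat.prime_two hp).2 (by omega)
    have h3 := congrArg norm hω.prod_one_sub_pow_eq_order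
    rw [norm_prod, show p - 1 = p / 2 + p / 2 by omega, Finset.prod_range_add,
      ← Finset.prod_range_reflect (fun x => ‖1 - (ζ ^ 2) ^ (p / 2 + x + 1)‖)] at h3
    rw [Finset.prod_congr rfl (g := fun k => ‖ζ ^ (k + 1) - ζ ^ (p - (k + 1))‖), hr',
      Finset.prod_congr rfl (g := fun k => ‖ζ ^ (k + 1) - ζ ^ (p - (k + 1))‖), hr'] at h3
    · rw [h3, ← Nat.cast_succ, show (p / 2 + p / 2).succ = p by omega]
      simp
    · intro k hk
      rw [Finset.mem_range] at hk
      have : ζ ^ (k + 1) - ζ ^ (p - (k + 1)) =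
          ζ ^ (k + 1) * (1 - (ζ ^ 2) ^ (p / 2 + (p / 2 - 1 - k) + 1)) := by
        rw [← pow_mul, mul_sub, ← pow_add,
          show k + 1 + 2 * (p / 2 + (p / 2 - 1 - k) + 1) = p + (p - (k + 1)) by omega,
          pow_add ζ p, hprim.pow_eq_one]
        ring
      rw [this, norm_mul, norm_pow, hnz]; simp
    · intro k hk
      rw [Finset.mem_range] at hk
      have : ζ ^ (k + 1) - ζ ^ (p - (k + 1)) =
          - (ζ ^ (p - (k + 1)) * (1 - (ζ ^ 2) ^ (k + 1))) := by
        rw [← pow_mul, mul_sub, ← pow_add,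
          show p - (k + 1) + 2 * (k + 1) = p + (k + 1) by omega,
          pow_add ζ p, hprim.pow_eq_one]
        ring
      rw [this, norm_neg, norm_mul, norm_pow, hnz]; simp
  rw [e1, ← e2, Real.sqrt_mul_self hrpos.le]

lemma sum_zmod_eq_range (p : ℕ) [NeZero p] {M : Type*} [AddCommMonoid M] (f : ZMod p → M) :
    ∑ x, f x = ∑ j ∈ Finset.range p, f (j : ZMod p) := by
  symm
  refine Finset.sum_bij (fun j _ => (j : ZMod p)) (by simp) ?_ ?_ (by simp)
  · intro a ha b hb h
    rw [Finset.mem_range] at ha hb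
    rw [ZMod.natCast_eq_natCast_iff'] at h
    rwa [Nat.mod_eq_of_lt ha, Nat.mod_eq_of_lt hb] at h
  · intro b _
    exact ⟨b.val, Finset.mem_range.2 (ZMod.val_lt b), by simp⟩

lemma gauss_value (p : ℕ) [Fact p.Prime] (hmod : p % 8 = 3) (ζ : ℂ)
    (hζ : ζ = Complex.exp (2 * Real.pi * Complex.I / p)) :
    (∑ j ∈ Finset.range p, ((quadraticChar (ZMod p) (j : ZMod p) : ℤ) : ℂ) * ζ ^ j =
      Complex.I * (Real.sqrt p : ℂ)) ∧ ∀ a : ℕ,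
    (∑ j ∈ Finset.range p, ((quadraticChar (ZMod p) (j : ZMod p) : ℤ) : ℂ) * ζ ^ (a * j) =
      (quadraticChar (ZMod p) (a : ZMod p) : ℤ) * (Complex.I * (Real.sqrt p : ℂ))) := by
  have hp : p.Prime := Fact.out
  have hprim : IsPrimitiveRoot ζ p := hζ ▸ Complex.isPrimitiveRoot_exp p hp.ne_zero
  have hch : ringChar (ZMod p) ≠ 2 := by rw [ZMod.ringChar_zmod_n]; omega
  set χ : MulChar (ZMod p) ℂ := (quadraticChar (ZMod p)).ringHomComp (Int.castRingHom ℂ) with hχ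
  have hχa : ∀ x, χ x = ((quadraticChar (ZMod p) x : ℤ) : ℂ) := fun x => rfl
  have hχ1 : χ ≠ 1 := by
    rw [hχ, MulChar.ringHomComp_ne_one_iff (RingHom.injective_int _)]
    exact quadraticChar_ne_one hch
  have hχq : χ.IsQuadratic := (quadraticChar_isQuadratic (ZMod p)).comp _
  have hψ : ∀ j : ℕ, ZMod.stdAddChar (N := p) (j : ZMod p) = ζ ^ j := by
    intro j
    have := ZMod.stdAddChar_coe (N := p) (j : ℤ)
    rw [Int.cast_natCast] at this
    rw [this, hζ, ← Complex.exp_nat_mul]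
    congr 1
    push_cast; ring
  have hg : gaussSum χ (ZMod.stdAddChar (N := p)) =
      ∑ j ∈ Finset.range p, ((quadraticChar (ZMod p) (j : ZMod p) : ℤ) : ℂ) * ζ ^ j := by
    rw [gaussSum, sum_zmod_eq_range]
    simp only [hψ, hχa]
  have hm1 : χ (-1) = -1 := by
    rw [hχa, quadraticChar_neg_one hch, ZMod.card, ZMod.χ₄_nat_three_mod_four (by omega)]
    simp
  have hprimψ := ZMod.isPrimitive_stdAddChar p
  have hsq := gaussSum_sq hχ1 hχq hprimψ
  rw [hm1, ZMod.card, hg] at hsq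
  have hs : ((Real.sqrt p : ℝ) : ℂ) ^ 2 = p := by
    rw [← Complex.ofReal_pow, Real.sq_sqrt (by positivity)]; simp
  have main : ∑ j ∈ Finset.range p, ((quadraticChar (ZMod p) (j : ZMod p) : ℤ) : ℂ) * ζ ^ j =
      Complex.I * (Real.sqrt p : ℂ) := by
    have : (∑ j ∈ Finset.range p, ((quadraticChar (ZMod p) (j : ZMod p) : ℤ) : ℂ) * ζ ^ j) ^ 2 =
      (Complex.I * (Real.sqrt p : ℂ)) ^ 2 := by
      rw [hsq, mul_pow, hs, Complex.I_sq]
    rcases sq_eq_sq_iff_eq_or_eq_neg.1 this with h | h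
    · exact h
    · exfalso
      have := gauss_sign_eps p hmod ζ hprim (-1) (by
        rw [h, gauss_prod_value p hmod ζ hζ]; simp)
      push_cast at this
      have h2 : ((2 : ℕ) : ZMod p) = 0 := by push_cast; linear_combination -this
      rw [ZMod.natCast_eq_zero_iff] at h2
      have := Nat.le_of_dvd two_pos h2
      have := hp.two_le
      omega
  refine ⟨main, fun a => ?_⟩
  by_cases ha : (a : ZMod p) = 0
  · rw [ha]
    rw [MulChar.map_zero, Int.cast_zero, zero_mul]
    have h3 := MulChar.sum_eq_zero_of_ne_one hχ1
    rw [sum_zmod_eq_range] at h3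
    rw [← h3]
    refine Finset.sum_congr rfl fun j _ => ?_
    rw [ZMod.natCast_eq_zero_iff] at ha
    rw [hχa, pow_mul, (hprim.pow_eq_one_iff_dvd a).2 ha]; simp
  · have h3 := gaussSum_mulShift χ (ZMod.stdAddChar (N := p)) (Units.mk0 _ ha)
    rw [hg, main, Units.val_mk0] at h3
    have h4 : χ (a : ZMod p) * χ (a : ZMod p) = 1 := by
      rw [hχa, ← Int.cast_mul, ← sq, quadraticChar_sq_one ha]; simp
    rw [← h3, ← hχa, ← mul_assoc, h4, one_mul, gaussSum, sum_zmod_eq_range]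
    refine Finset.sum_congr rfl fun j _ => ?_
    rw [AddChar.mulShift_apply, ← Nat.cast_mul, hψ, hχa]

lemma rpow_diff_bound (x y s : ℝ) (hx : 1 ≤ x) (hxy : x ≤ y) (hs1 : 1 ≤ s) (hs2 : s ≤ 2) :
    |x ^ (-s) - y ^ (-s)| ≤ 2 * (y - x) / (x * y) := by
  have hx0 : 0 < x := by linarith
  have hy0 : 0 < y := by linarith
  have h1 : y ^ (-s) = x ^ (-s) * (x / y) ^ s := by
    rw [Real.div_rpow hx0.le hy0.le, Real.rpow_neg hx0.le, Real.rpow_neg hy0.le]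
    have := (Real.rpow_pos_of_pos hx0 s).ne'
    field_simp
  have ht0 : 0 < x / y := by positivity
  have ht1 : x / y ≤ 1 := (div_le_one hy0).2 hxy
  have h2 : (x / y) ^ s ≤ 1 := Real.rpow_le_one ht0.le ht1 (by linarith)
  have h3 : (x / y) ^ (2 : ℝ) ≤ (x / y) ^ s := Real.rpow_le_rpow_of_exponent_ge ht0 ht1 hs2
  have h4 : x ^ (-s) ≤ x ^ (-1 : ℝ) := Real.rpow_le_rpow_of_exponent_le hx (by linarith)
  have h5 : 0 < x ^ (-s) := Real.rpow_pos_of_pos hx0 _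
  rw [Real.rpow_neg_one] at h4
  rw [Real.rpow_two] at h3
  rw [h1, abs_of_nonneg (by nlinarith)]
  calc x ^ (-s) - x ^ (-s) * (x / y) ^ s = x ^ (-s) * (1 - (x / y) ^ s) := by ring
    _ ≤ x⁻¹ * (1 - (x / y) ^ 2) := by
      apply mul_le_mul h4 (by linarith) (by linarith) (by positivity)
    _ = (y - x) * (y + x) / (x * y * y) := by field_simp; ring
    _ ≤ (y - x) * (2 * y) / (x * y * y) := by
      gcongr
      linarith
    _ = 2 * (y - x) / (x * y) := by field_simp

/-- block sums of the Dirichlet series -/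
noncomputable def blockSum (p : ℕ) [Fact p.Prime] (s : ℝ) (k : ℕ) : ℝ :=
  ∑ a ∈ Finset.range p, ((quadraticChar (ZMod p) (a : ZMod p) : ℤ) : ℝ) * ((k * p + a : ℕ) : ℝ) ^ (-s)

lemma qchar_sum_zero (p : ℕ) [Fact p.Prime] (h2 : p ≠ 2) :
    ∑ a ∈ Finset.range p, ((quadraticChar (ZMod p) (a : ZMod p) : ℤ) : ℝ) = 0 := by
  have hch : ringChar (ZMod p) ≠ 2 := by rwa [ZMod.ringChar_zmod_n]
  have := quadraticChar_sum_zero hch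
  rw [sum_zmod_eq_range] at this
  exact_mod_cast this

lemma qchar_abs_le (p : ℕ) [Fact p.Prime] (x : ZMod p) :
    |((quadraticChar (ZMod p) x : ℤ) : ℝ)| ≤ 1 := by
  rcases quadraticChar_isQuadratic (ZMod p) x with h | h | h <;> rw [h] <;> simp

lemma blockSum_bound (p : ℕ) [Fact p.Prime] (h2 : p ≠ 2) (s : ℝ) (hs1 : 1 ≤ s) (hs2 : s ≤ 2)
    (k : ℕ) : |blockSum p s k| ≤ 2 * p ^ 2 * (1 / ((k + 1 : ℕ) : ℝ) ^ 2) := by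
  have hp : p.Prime := Fact.out
  have hp1 : (1 : ℝ) ≤ p := by exact_mod_cast hp.one_lt.le
  have h : blockSum p s k = ∑ a ∈ Finset.range p, ((quadraticChar (ZMod p) (a : ZMod p) : ℤ) : ℝ) *
      (((k * p + a : ℕ) : ℝ) ^ (-s) - ((k * p + p : ℕ) : ℝ) ^ (-s)) := by
    simp only [mul_sub, Finset.sum_sub_distrib, ← Finset.sum_mul]
    rw [qchar_sum_zero p h2, zero_mul, sub_zero]
    rfl
  rw [h]
  refine (Finset.abs_sum_le_sum_abs _ _).trans ?_
  have : ∀ a ∈ Finset.range p, |((quadraticChar (ZMod p) (a : ZMod p) : ℤ) : ℝ) *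
      (((k * p + a : ℕ) : ℝ) ^ (-s) - ((k * p + p : ℕ) : ℝ) ^ (-s))| ≤
      2 * p * (1 / ((k + 1 : ℕ) : ℝ) ^ 2) := by
    intro a ha
    rw [Finset.mem_range] at ha
    rcases Nat.eq_zero_or_pos a with rfl | ha0
    · rw [Nat.cast_zero, MulChar.map_zero, Int.cast_zero, zero_mul, abs_zero]; positivity
    rw [abs_mul]
    refine (mul_le_of_le_one_left (abs_nonneg _) (qchar_abs_le p _)).trans ?_
    have hk : k ≤ k * p := Nat.le_mul_of_pos_right k hp.pos
    have hx1 : ((k + 1 : ℕ) : ℝ) ≤ ((k * p + a : ℕ) : ℝ) := by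
      exact_mod_cast (by omega)
    have hy1 : ((k * p + a : ℕ) : ℝ) ≤ ((k * p + p : ℕ) : ℝ) := by
      exact_mod_cast (by omega)
    have hk1 : (1 : ℝ) ≤ ((k + 1 : ℕ) : ℝ) := by exact_mod_cast (by omega)
    refine (rpow_diff_bound _ _ s (hk1.trans hx1) hy1 hs1 hs2).trans ?_
    rw [mul_one_div, sq]
    have hd : ((k * p + p : ℕ) : ℝ) - ((k * p + a : ℕ) : ℝ) ≤ p := by
      push_cast
      have : (0 : ℝ) ≤ a := by positivity
      linarith
    have hy2 := hx1.trans hy1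
    gcongr
  refine (Finset.sum_le_card_nsmul _ _ _ this).trans ?_
  rw [Finset.card_range, nsmul_eq_mul]
  apply le_of_eq; ring

lemma bound_summable (c : ℝ) : Summable fun k : ℕ => c * (1 / ((k + 1 : ℕ) : ℝ) ^ 2) :=
  (((summable_nat_add_iff 1).2 (Real.summable_one_div_nat_pow.2 one_lt_two))).mul_left c

lemma blockSum_summable (p : ℕ) [Fact p.Prime] (h2 : p ≠ 2) (s : ℝ) (hs1 : 1 ≤ s) (hs2 : s ≤ 2) :
    Summable (blockSum p s) :=
  Summable.of_norm_bounded (bound_summable (2 * p ^ 2)) fun k => blockSum_bound p h2 s hs1 hs2 k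

lemma sum_range_block (f : ℕ → ℝ) (p N : ℕ) :
    ∑ n ∈ Finset.range (N * p), f n = ∑ k ∈ Finset.range N, ∑ a ∈ Finset.range p, f (k * p + a) := by
  induction N with
  | zero => simp
  | succ N ih => rw [Nat.succ_mul, Finset.sum_range_add, ih, Finset.sum_range_succ]

lemma blockSum_tsum_nonneg (p : ℕ) [Fact p.Prime] (h2 : p ≠ 2) (s : ℝ) (hs1 : 1 < s) (hs2 : s ≤ 2) :
    0 ≤ ∑' k, blockSum p s k := by
  have hp : p.Prime := Fact.out
  let f : ℕ →*₀ ℝ :=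
    { toFun := fun n => ((quadraticChar (ZMod p) (n : ZMod p) : ℤ) : ℝ) * (n : ℝ) ^ (-s)
      map_zero' := by
        rw [Nat.cast_zero, MulChar.map_zero, Int.cast_zero, zero_mul]
      map_one' := by
        rw [Nat.cast_one, MulChar.map_one]; simp
      map_mul' := by
        intro a b
        rw [Nat.cast_mul, map_mul, Nat.cast_mul, Real.mul_rpow (by positivity) (by positivity)]
        push_cast
        ring }
  have hf : ∀ n, f n = ((quadraticChar (ZMod p) (n : ZMod p) : ℤ) : ℝ) * (n : ℝ) ^ (-s) :=
    fun _ => rfl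
  have hfn : ∀ n, ‖f n‖ ≤ (n : ℝ) ^ (-s) := by
    intro n
    rw [hf, norm_mul, Real.norm_eq_abs, Real.norm_eq_abs,
      abs_of_nonneg (Real.rpow_nonneg (Nat.cast_nonneg n) _)]
    exact mul_le_of_le_one_left (Real.rpow_nonneg (Nat.cast_nonneg n) _) (qchar_abs_le p _)
  have hsum : Summable fun n => ‖f n‖ :=
    Summable.of_nonneg_of_le (fun _ => norm_nonneg _) hfn
      (Real.summable_nat_rpow.2 (by linarith))
  have hE := EulerProduct.eulerProduct_completely_multiplicative hsum
  have hnn : 0 ≤ ∑' n, f n := by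
    refine ge_of_tendsto' hE fun n => Finset.prod_nonneg fun q hq => ?_
    rw [inv_nonneg, sub_nonneg]
    refine (le_abs_self _).trans ((hfn q).trans ?_)
    apply Real.rpow_le_one_of_one_le_of_nonpos
    · exact_mod_cast (Nat.prime_of_mem_primesBelow hq).one_lt.le
    · linarith
  have h1 : Filter.Tendsto (fun N => ∑ n ∈ Finset.range (N * p), f n) Filter.atTop
      (nhds (∑' n, f n)) :=
    hsum.of_norm.hasSum.tendsto_sum_nat.comp
      (Filter.tendsto_id.atTop_mul_const' hp.pos)
  have h3 := (blockSum_summable p h2 s hs1.le hs2).hasSum.tendsto_sum_nat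
  have h4 : (fun N => ∑ n ∈ Finset.range (N * p), f n) =
      fun N => ∑ k ∈ Finset.range N, blockSum p s k := by
    funext N
    rw [sum_range_block]
    refine Finset.sum_congr rfl fun k _ => Finset.sum_congr rfl fun a _ => ?_
    rw [hf]
    simp
  rw [h4] at h1
  rwa [tendsto_nhds_unique h3 h1]

lemma blockSum_one_nonneg (p : ℕ) [Fact p.Prime] (h2 : p ≠ 2) : 0 ≤ ∑' k, blockSum p 1 k := by
  have hev : ∀ᶠ s : ℝ in nhdsWithin 1 (Set.Ioi 1), 1 < s ∧ s ≤ 2 := by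
    filter_upwards [Ioc_mem_nhdsGT (show (1 : ℝ) < 2 by norm_num)] with s hs using hs
  have ht : Filter.Tendsto (fun s : ℝ => ∑' k, blockSum p s k) (nhdsWithin 1 (Set.Ioi 1))
      (nhds (∑' k, blockSum p 1 k)) := by
    refine tendsto_tsum_of_dominated_convergence (bound_summable (2 * p ^ 2)) ?_ ?_
    · intro k
      refine Filter.Tendsto.mono_left ?_ nhdsWithin_le_nhds
      refine tendsto_finsetSum _ fun a _ => ?_
      rcases Nat.eq_zero_or_pos a with rfl | ha0
      · rw [Nat.cast_zero, MulChar.map_zero, Int.cast_zero]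
        simp
      refine Filter.Tendsto.const_mul _ ?_
      refine Filter.Tendsto.rpow tendsto_const_nhds (continuous_neg.tendsto (1 : ℝ)) (Or.inl ?_)
      exact_mod_cast (by omega)
    · filter_upwards [hev] with s hs k
      exact blockSum_bound p h2 s hs.1.le hs.2 k
  refine ge_of_tendsto ht ?_
  filter_upwards [hev] with s hs using blockSum_tsum_nonneg p h2 s hs.1 hs.2

lemma hasSum_cot (p a : ℕ) (ha : 0 < a) (hap : a < p) :
    HasSum (fun n : ℕ => (((n + 1) * p + a : ℕ) : ℝ)⁻¹ - (((n + 1 : ℕ) * p - a : ℝ))⁻¹)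
      (Real.pi / p * Real.cot (Real.pi * a / p) - (a : ℝ)⁻¹) := by
  have hp0 : (p : ℂ) ≠ 0 := by exact_mod_cast (by omega)
  have ha0 : (a : ℂ) ≠ 0 := by exact_mod_cast (by omega)
  have hx : (a / p : ℂ) ∈ Complex.integerComplement := by
    rw [Complex.integerComplement, Set.mem_compl_iff, Set.mem_range]
    rintro ⟨m, hm⟩
    rw [eq_div_iff hp0] at hm
    have hm' : m * p = (a : ℤ) := by exact_mod_cast hm
    have : (p : ℤ) ∣ a := ⟨m, by rw [← hm']; ring⟩
    have := Nat.le_of_dvd ha (by exact_mod_cast this)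
    omega
  have h1 := (summable_cotTerm hx).hasSum
  simp only [cotTerm] at h1
  rw [← cot_series_rep' hx] at h1
  have h2 := h1.mul_left ((p : ℂ)⁻¹)
  rw [← Complex.hasSum_ofReal]
  convert! h2 using 1
  · funext n
    push_cast
    have e1 : ((n : ℂ) + 1) * p + a ≠ 0 := by exact_mod_cast (by positivity)
    have e2 : ((n : ℂ) + 1) * p - a ≠ 0 := by
      intro h
      have : ((n + 1) * p : ℕ) = a := by
        have : ((n : ℂ) + 1) * p = a := by linear_combination h
        exact_mod_cast this
      nlinarith
    have e3 : (a / p : ℂ) - (n + 1) ≠ 0 := by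
      intro h
      field_simp at h
      apply e2; linear_combination -h
    have e4 : (a / p : ℂ) + (n + 1) ≠ 0 := by
      intro h
      field_simp at h
      apply e1; linear_combination h
    have e5 : (a / p : ℂ) - (n + 1) = -((((n : ℂ) + 1) * p - a) / p) := by field_simp; ring
    have e6 : (a / p : ℂ) + (n + 1) = ((((n : ℂ) + 1) * p + a) / p) := by field_simp; ring
    rw [e5, e6]
    field_simp
    ring
  · push_cast
    rw [← mul_div_assoc]
    field_simp

lemma qchar_neg (p : ℕ) [Fact p.Prime] (hmod : p % 8 = 3) (x : ZMod p) :
    quadraticChar (ZMod p) (-x) = - quadraticChar (ZMod p) x := by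
  have hch : ringChar (ZMod p) ≠ 2 := by rw [ZMod.ringChar_zmod_n]; omega
  rw [← neg_one_mul, map_mul, quadraticChar_neg_one hch, ZMod.card,
    ZMod.χ₄_nat_three_mod_four (by omega)]
  ring

lemma cot_sum_nonneg (p : ℕ) [Fact p.Prime] (hmod : p % 8 = 3) :
    0 ≤ ∑ a ∈ Finset.range p, ((quadraticChar (ZMod p) (a : ZMod p) : ℤ) : ℝ) *
      Real.cot (Real.pi * a / p) := by
  have hp : p.Prime := Fact.out
  have h2 : p ≠ 2 := by omega
  set c : ℕ → ℝ := fun a => ((quadraticChar (ZMod p) (a : ZMod p) : ℤ) : ℝ) with hc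
  have hc0 : c 0 = 0 := by
    simp only [hc]; rw [Nat.cast_zero, MulChar.map_zero, Int.cast_zero]
  have hb : ∀ k, blockSum p 1 k = ∑ a ∈ Finset.range p, c a * ((k * p + a : ℕ) : ℝ)⁻¹ := by
    intro k
    simp only [blockSum, Real.rpow_neg_one, hc]
  have hrefl : ∀ n : ℕ, ∑ a ∈ Finset.range p, c a * (((n + 1 : ℕ) * p - a : ℝ))⁻¹ =
      - blockSum p 1 n := by
    intro n
    rw [hb]
    obtain ⟨q, hq⟩ : ∃ q, p = q + 1 := ⟨p - 1, by omega⟩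
    have hs : ∀ g : ℕ → ℝ, ∑ a ∈ Finset.range p, c a * g a =
        ∑ a ∈ Finset.range q, c (a + 1) * g (a + 1) := by
      intro g
      rw [show Finset.range p = Finset.range (q + 1) by rw [hq], Finset.sum_range_succ', hc0]
      simp
    rw [hs, hs, ← Finset.sum_range_reflect, ← Finset.sum_neg_distrib]
    refine Finset.sum_congr rfl fun a ha => ?_
    rw [Finset.mem_range] at ha
    have e1 : q - 1 - a + 1 = p - (a + 1) := by omega
    rw [e1, ← neg_mul]
    congr 1
    · simp only [hc]
      rw [Nat.cast_sub (by omega), ZMod.natCast_self, zero_sub, qchar_neg p hmod]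
      push_cast; ring
    · rw [Nat.cast_sub (by omega)]
      congr 1
      push_cast; ring
  have hsm := blockSum_summable p h2 1 le_rfl (by norm_num)
  have hH : HasSum (fun n : ℕ => ∑ a ∈ Finset.range p, c a *
      ((((n + 1) * p + a : ℕ) : ℝ)⁻¹ - (((n + 1 : ℕ) * p - a : ℝ))⁻¹))
      (∑ a ∈ Finset.range p, c a * (Real.pi / p * Real.cot (Real.pi * a / p) - (a : ℝ)⁻¹)) := by
    refine hasSum_sum fun a ha => ?_
    rw [Finset.mem_range] at ha
    rcases Nat.eq_zero_or_pos a with rfl | ha0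
    · rw [hc0]; simp
    · exact (hasSum_cot p a ha0 ha).mul_left _
  have hfun : (fun n : ℕ => ∑ a ∈ Finset.range p, c a *
      ((((n + 1) * p + a : ℕ) : ℝ)⁻¹ - (((n + 1 : ℕ) * p - a : ℝ))⁻¹)) =
      fun n => blockSum p 1 (n + 1) + blockSum p 1 n := by
    funext n
    simp only [mul_sub, Finset.sum_sub_distrib]
    rw [hrefl, hb (n + 1)]
    ring
  rw [hfun] at hH
  have hT := ((hasSum_nat_add_iff' 1).2 hsm.hasSum).add hsm.hasSum
  have heq := hH.unique hT
  rw [Finset.sum_range_one, hb 0] at heq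
  simp only [mul_sub, Finset.sum_sub_distrib, zero_mul, zero_add] at heq
  have hnn := blockSum_one_nonneg p h2
  have h3 : ∑ a ∈ Finset.range p, c a * (Real.pi / p * Real.cot (Real.pi * a / p)) =
      Real.pi / p * ∑ a ∈ Finset.range p, c a * Real.cot (Real.pi * a / p) := by
    rw [Finset.mul_sum]
    exact Finset.sum_congr rfl fun a _ => by ring
  rw [h3] at heq
  have h4 : 0 ≤ Real.pi / p * ∑ a ∈ Finset.range p, c a * Real.cot (Real.pi * a / p) := by
    linarith
  have h5 : 0 < Real.pi / p := by
    have : (0 : ℝ) < p := by exact_mod_cast hp.pos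
    have := Real.pi_pos
    positivity
  exact nonneg_of_mul_nonneg_right h4 h5

lemma sum_mul_pow_eq (p : ℕ) (z : ℂ) (hz : z ≠ 1) (hzp : z ^ p = 1) :
    ∑ a ∈ Finset.range p, (a : ℂ) * z ^ a = p / (z - 1) := by
  have hz' : z - 1 ≠ 0 := sub_ne_zero.2 hz
  have key : ∀ n : ℕ, (z - 1) * ((∑ a ∈ Finset.range n, (a : ℂ) * z ^ a) * (z - 1)) =
      (z - 1) * n * z ^ n - z * (z ^ n - 1) := by
    intro n
    induction n with
    | zero => simp
    | succ n ih =>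
      rw [Finset.sum_range_succ, add_mul, mul_add, ih]
      push_cast
      ring
  have := key p
  rw [hzp] at this
  rw [eq_div_iff hz']
  apply mul_left_cancel₀ hz'
  rw [this]; ring

lemma qchar_weighted_sum_nonpos (p : ℕ) [Fact p.Prime] (hmod : p % 8 = 3) :
    ∑ a ∈ Finset.range p, (quadraticChar (ZMod p) (a : ZMod p) : ℤ) * (a : ℤ) ≤ 0 := by
  have hp : p.Prime := Fact.out
  set ζ : ℂ := Complex.exp (2 * Real.pi * Complex.I / p) with hζ
  have hprim : IsPrimitiveRoot ζ p := Complex.isPrimitiveRoot_exp p hp.ne_zero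
  have hg := (gauss_value p hmod ζ hζ).2
  set c : ℕ → ℤ := fun a => (quadraticChar (ZMod p) (a : ZMod p) : ℤ) with hc
  have hc0 : c 0 = 0 := by
    simp only [hc]; rw [Nat.cast_zero, MulChar.map_zero]
  have hp0 : (p : ℂ) ≠ 0 := by exact_mod_cast hp.ne_zero
  set S : ℤ := ∑ a ∈ Finset.range p, c a * (a : ℤ) with hS
  set K : ℝ := ∑ a ∈ Finset.range p, (c a : ℝ) * Real.cot (Real.pi * a / p) with hK
  have hK0 : 0 ≤ K := cot_sum_nonneg p hmod
  have hcs : ∑ a ∈ Finset.range p, (c a : ℂ) = 0 := by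
    have := qchar_sum_zero p (by omega)
    exact_mod_cast this
  have e1 : (S : ℂ) * (Complex.I * (Real.sqrt p : ℂ)) =
      ∑ k ∈ Finset.range p, (c k : ℂ) * ∑ a ∈ Finset.range p, (a : ℂ) * (ζ ^ k) ^ a := by
    rw [hS]
    push_cast
    rw [Finset.sum_mul]
    simp only [Finset.mul_sum]
    rw [Finset.sum_comm]
    refine Finset.sum_congr rfl fun a _ => ?_
    rw [mul_right_comm, ← hg a, Finset.sum_mul]
    refine Finset.sum_congr rfl fun k _ => ?_
    rw [← pow_mul, mul_comm k a]
    ring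
  have e2 : ∑ k ∈ Finset.range p, (c k : ℂ) * ∑ a ∈ Finset.range p, (a : ℂ) * (ζ ^ k) ^ a =
      ∑ k ∈ Finset.range p, ((c k : ℂ) * (-(p / 2)) +
        (-(p / 2) * Complex.I) * ((c k : ℂ) * ((Real.cot (Real.pi * k / p) : ℝ) : ℂ))) := by
    refine Finset.sum_congr rfl fun k hk => ?_
    rw [Finset.mem_range] at hk
    rcases Nat.eq_zero_or_pos k with rfl | hk0
    · rw [hc0]; simp
    have hz1 : ζ ^ k ≠ 1 := hprim.pow_ne_one_of_pos_of_lt hk0.ne' hk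
    rw [sum_mul_pow_eq p (ζ ^ k) hz1 (by rw [← pow_mul, mul_comm, pow_mul, hprim.pow_eq_one, one_pow])]
    have hcot : ((Real.cot (Real.pi * k / p) : ℝ) : ℂ) = (ζ ^ k + 1) / (Complex.I * (1 - ζ ^ k)) := by
      rw [Complex.ofReal_cot, Complex.cot_eq_exp_ratio]
      have : Complex.exp (2 * Complex.I * ((Real.pi * k / p : ℝ) : ℂ)) = ζ ^ k := by
        rw [hζ, ← Complex.exp_nat_mul]
        congr 1
        push_cast; ring
      rw [this]
    rw [hcot]
    have h1 : ζ ^ k - 1 ≠ 0 := sub_ne_zero.2 hz1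
    have h2 : 1 - ζ ^ k ≠ 0 := sub_ne_zero.2 hz1.symm
    have hI := Complex.I_ne_zero
    field_simp
    ring
  rw [e2, Finset.sum_add_distrib, ← Finset.sum_mul, hcs, ← Finset.mul_sum] at e1
  have e3 : (S : ℂ) * (Real.sqrt p : ℂ) = -(p / 2) * (K : ℂ) := by
    apply mul_left_cancel₀ Complex.I_ne_zero
    rw [hK]
    push_cast
    push_cast at e1
    linear_combination e1
  have e4 : (S : ℝ) * Real.sqrt p = -(p / 2) * K := by
    apply Complex.ofReal_injective
    push_cast
    linear_combination e3
  have hpR : (0 : ℝ) < p := by exact_mod_cast hp.pos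
  have hsq : 0 < Real.sqrt p := Real.sqrt_pos.2 hpR
  by_contra hcon
  push Not at hcon
  have h6 : (0 : ℝ) < S := by exact_mod_cast hcon
  have h7 : 0 < (S : ℝ) * Real.sqrt p := by positivity
  have h8 : 0 ≤ (p : ℝ) / 2 * K := by positivity
  linarith

open scoped Classical in
/-- For a prime `p ≡ 3 (mod 8)`, the sum of all non-residues of `p` in `[1, p-1]`
is strictly greater than the sum of all quadratic residues of `p` in `[1, p-1]`. -/
theorem sum_nonresidues_gt_sum_residues_of_prime_mod_eight_eq_three
    (p : ℕ) (hp : p.Prime) (hmod : p % 8 = 3) :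
    ∑ y ∈ (Finset.Icc 1 (p - 1)).filter
        (fun y => ∃ x : ℤ, x ^ 2 ≡ (y : ℤ) [ZMOD (p : ℤ)]), y <
      ∑ y ∈ (Finset.Icc 1 (p - 1)).filter
        (fun y => ¬ ∃ x : ℤ, x ^ 2 ≡ (y : ℤ) [ZMOD (p : ℤ)]), y := by
  have : Fact p.Prime := ⟨hp⟩
  have hle := qchar_weighted_sum_nonpos p hmod
  have hsq : ∀ y : ℕ, (∃ x : ℤ, x ^ 2 ≡ (y : ℤ) [ZMOD (p : ℤ)]) ↔ IsSquare (y : ZMod p) := by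
    intro y
    constructor
    · rintro ⟨x, hx⟩
      rw [← ZMod.intCast_eq_intCast_iff] at hx
      push_cast at hx
      exact ⟨(x : ZMod p), by rw [← hx, sq]⟩
    · rintro ⟨z, hz⟩
      refine ⟨(z.val : ℤ), ?_⟩
      rw [← ZMod.intCast_eq_intCast_iff]
      push_cast
      rw [ZMod.natCast_zmod_val, hz, sq]
  have hval : ∀ y ∈ Finset.Icc 1 (p - 1), (quadraticChar (ZMod p) (y : ZMod p) : ℤ) =
      if (∃ x : ℤ, x ^ 2 ≡ (y : ℤ) [ZMOD (p : ℤ)]) then 1 else -1 := by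
    intro y hy
    rw [Finset.mem_Icc] at hy
    have hy0 : (y : ZMod p) ≠ 0 := by
      rw [Ne, ZMod.natCast_eq_zero_iff]
      intro h
      have := Nat.le_of_dvd (by omega) h
      omega
    split_ifs with h
    · exact (quadraticChar_one_iff_isSquare hy0).2 ((hsq y).1 h)
    · exact quadraticChar_neg_one_iff_not_isSquare.2 fun h' => h ((hsq y).2 h')
  have hrange : Finset.range p = insert 0 (Finset.Icc 1 (p - 1)) := by
    ext x; simp; have := hp.pos; omega
  rw [hrange, Finset.sum_insert (by simp), Nat.cast_zero, MulChar.map_zero, zero_mul, zero_add] at hle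
  have hdiff : ∑ a ∈ Finset.Icc 1 (p - 1), (quadraticChar (ZMod p) (a : ZMod p) : ℤ) * (a : ℤ) =
      ∑ y ∈ (Finset.Icc 1 (p - 1)).filter
        (fun y : ℕ => ∃ x : ℤ, x ^ 2 ≡ (y : ℤ) [ZMOD (p : ℤ)]), (y : ℤ) -
      ∑ y ∈ (Finset.Icc 1 (p - 1)).filter
        (fun y : ℕ => ¬ ∃ x : ℤ, x ^ 2 ≡ (y : ℤ) [ZMOD (p : ℤ)]), (y : ℤ) := by
    rw [Finset.sum_filter, Finset.sum_filter]
    rw [← Finset.sum_sub_distrib]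
    refine Finset.sum_congr rfl fun a ha => ?_
    rw [hval a ha]
    by_cases h : ∃ x : ℤ, x ^ 2 ≡ (a : ℤ) [ZMOD (p : ℤ)]
    · simp only [if_pos h, if_neg (not_not.2 h)]; simp
    · simp only [if_neg h, if_pos h]; simp
  have htot := Finset.sum_filter_add_sum_filter_not (Finset.Icc 1 (p - 1))
    (fun y : ℕ => ∃ x : ℤ, x ^ 2 ≡ (y : ℤ) [ZMOD (p : ℤ)]) (fun y => y)
  have hgauss : ∑ y ∈ Finset.Icc 1 (p - 1), y = p * (p / 2) := by
    have h1 := Finset.sum_range_id_mul_two p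
    have h2 : ∑ y ∈ Finset.range p, y = ∑ y ∈ Finset.Icc 1 (p - 1), y := by
      rw [hrange, Finset.sum_insert (by simp), zero_add]
    rw [h2, show p - 1 = 2 * (p / 2) by omega] at h1
    rw [show p - 1 = 2 * (p / 2) by omega]
    nlinarith
  rw [hgauss] at htot
  have hodd : (p * (p / 2)) % 2 = 1 := by
    rw [Nat.mul_mod, show p % 2 = 1 by omega, show p / 2 % 2 = 1 by omega]
  rw [hdiff, ← Nat.cast_sum, ← Nat.cast_sum] at hle
  have hset : (do let a ← Finset.Icc 1 (p - 1); pure (a : ℤ) : Finset ℤ) =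
      (Finset.Icc 1 (p - 1)).map Nat.castEmbedding := by
    ext z
    simp [Finset.bind_def, eq_comm]
  have key : ∀ (P : ℤ → Prop) [DecidablePred P], ∑ y ∈ Finset.filter P
      (do let a ← Finset.Icc 1 (p - 1); pure (a : ℤ) : Finset ℤ), y =
      ((∑ y ∈ (Finset.Icc 1 (p - 1)).filter (fun y : ℕ => P (y : ℤ)), y : ℕ) : ℤ) := by
    intro P _
    rw [hset, Finset.filter_map, Finset.sum_map, Nat.cast_sum]
    rfl
  rw [key, key]
  omega
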